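/- Let ι be a finite index type with at least two elements, let q : ι → ℝ be a probability vector, let y : ι satisfy q_y = 0, and let (ℓ⁽ⁿ⁾)_{n∈ℕ} be a sequence of logit vectors ℓ⁽ⁿ⁾ : ι → ℝ such that F_q(ℓ⁽ⁿ⁾) → 0 as n → ∞. Then there exists N such that for all n ≥ N the unlearning margin is negative: UM(ℓ⁽ⁿ⁾, y) = ℓ⁽ⁿ⁾_y − max_{k ≠ y} ℓ⁽ⁿ⁾_k < 0. -/

import Mathlib

/-!
If `q y = 0`, the KL objective dominates the mass that the softmax puts on `y`: summing
`q i * log (q i / p i) ≥ q i - p i` over `i ≠ y` gives `F_q(ℓ) ≥ 1 - (1 - p y) = p y`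
(`softmax_le_klObj`). If the margin at `y` is nonnegative, then `y` has the largest logit, so
`p y ≥ 1 / |ι|` (`inv_card_le_softmax`). Hence a nonnegative margin is impossible as soon as
`F_q(ℓ) < 1 / |ι|`.
-/

open Finset Real Filter

/-- Softmax of a logit vector on a finite index type. -/
noncomputable def softmax {ι : Type*} [Fintype ι] (ℓ : ι → ℝ) (i : ι) : ℝ :=
  Real.exp (ℓ i) / ∑ j, Real.exp (ℓ j)

/-- Discrete KL objective `F_q(ℓ) = ∑ i, q i * log (q i / softmax ℓ i)`.
Terms with `q i = 0` contribute `0` automatically since `0 * x = 0`. -/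
noncomputable def klObj {ι : Type*} [Fintype ι] (q ℓ : ι → ℝ) : ℝ :=
  ∑ i, q i * Real.log (q i / softmax ℓ i)

lemma softmax_pos {ι : Type*} [Fintype ι] (ℓ : ι → ℝ) (i : ι) : 0 < softmax ℓ i :=
  div_pos (Real.exp_pos _)
    (Finset.sum_pos (fun j _ => Real.exp_pos (ℓ j)) ⟨i, Finset.mem_univ i⟩)

lemma sum_softmax {ι : Type*} [Fintype ι] [Nonempty ι] (ℓ : ι → ℝ) :
    ∑ i, softmax ℓ i = 1 := by
  have hpos : 0 < ∑ j, Real.exp (ℓ j) :=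
    Finset.sum_pos (fun j _ => Real.exp_pos (ℓ j)) Finset.univ_nonempty
  simp only [softmax]
  rw [← Finset.sum_div, div_self hpos.ne']

lemma sub_le_mul_log_div {a p : ℝ} (ha : 0 ≤ a) (hp : 0 < p) :
    a - p ≤ a * Real.log (a / p) := by
  rcases ha.eq_or_lt with rfl | ha
  · simpa using hp.le
  · calc a - p = a * (1 - (a / p)⁻¹) := by field_simp
      _ ≤ a * Real.log (a / p) :=
        mul_le_mul_of_nonneg_left (Real.one_sub_inv_le_log_of_pos (div_pos ha hp)) ha.le

/-- The softmax mass on a class outside the support of `q` is a lower bound for the KL objective. -/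
lemma softmax_le_klObj {ι : Type*} [Fintype ι] [DecidableEq ι] (q ℓ : ι → ℝ)
    (hq0 : ∀ i, 0 ≤ q i) (hq1 : ∑ i, q i = 1) (y : ι) (hqy : q y = 0) :
    softmax ℓ y ≤ klObj q ℓ := by
  have : Nonempty ι := ⟨y⟩
  have hsum := Finset.sum_le_sum (s := Finset.univ.erase y)
    fun i _ => sub_le_mul_log_div (hq0 i) (softmax_pos ℓ i)
  have hp := sum_softmax ℓ
  rw [← Finset.add_sum_erase _ _ (Finset.mem_univ y)] at hp hq1
  rw [klObj, ← Finset.add_sum_erase _ _ (Finset.mem_univ y), hqy, zero_mul]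
  rw [Finset.sum_sub_distrib] at hsum
  linarith

lemma inv_card_le_softmax {ι : Type*} [Fintype ι] (ℓ : ι → ℝ) (y : ι) (h : ∀ k, ℓ k ≤ ℓ y) :
    (Fintype.card ι : ℝ)⁻¹ ≤ softmax ℓ y := by
  have : Nonempty ι := ⟨y⟩
  have hcard : (0 : ℝ) < Fintype.card ι := Nat.cast_pos.2 Fintype.card_pos
  have hle : ∑ i, softmax ℓ i ≤ ∑ _i : ι, softmax ℓ y :=
    Finset.sum_le_sum fun i _ => div_le_div_of_nonneg_right (Real.exp_le_exp.2 (h i))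
      (Finset.sum_nonneg fun j _ => (Real.exp_pos (ℓ j)).le)
  rw [sum_softmax, Finset.sum_const, Finset.card_univ, nsmul_eq_mul] at hle
  exact (inv_le_iff_one_le_mul₀' hcard).2 hle

theorem eventually_negative_unlearning_margin
    {ι : Type*} [Fintype ι] [DecidableEq ι] [Nontrivial ι]
    (q : ι → ℝ) (hq0 : ∀ i, 0 ≤ q i) (hq1 : ∑ i, q i = 1)
    (y : ι) (hqy : q y = 0)
    (L : ℕ → ι → ℝ)
    (hL : Tendsto (fun n => klObj q (L n)) atTop (nhds 0)) :
    ∃ N : ℕ, ∀ n ≥ N,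
      L n y - (Finset.univ.erase y).sup'
        (by
          obtain ⟨z, hz⟩ := exists_ne y
          exact ⟨z, Finset.mem_erase.2 ⟨hz, Finset.mem_univ z⟩⟩) (L n) < 0 := by
  have hcard : (0 : ℝ) < (Fintype.card ι : ℝ)⁻¹ :=
    inv_pos.2 (Nat.cast_pos.2 Fintype.card_pos)
  obtain ⟨N, hN⟩ := eventually_atTop.1 (hL.eventually_lt_const hcard)
  refine ⟨N, fun n hn => ?_⟩
  by_contra hneg
  have hsup := sub_nonneg.1 (not_lt.1 hneg)
  have hmax : ∀ k, L n k ≤ L n y := by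
    intro k
    by_cases hk : k = y
    · rw [hk]
    · exact (Finset.le_sup' (L n) (Finset.mem_erase.2 ⟨hk, Finset.mem_univ k⟩)).trans hsup
  exact absurd (hN n hn) (not_lt.2
    ((inv_card_le_softmax (L n) y hmax).trans (softmax_le_klObj q (L n) hq0 hq1 y hqy)))
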